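/- (Perturbation of principal eigenfunctions: zero asymptotic relative error.) Assume Condition (★) in full. Then for every i ∈ {1,…,n}, every s_i ∈ {1,…,d_i}, and every initial condition (x_1,…,x_n), lim_{t→∞} |ψ_{i,s_i}(Π_i ∘ Lin^{∘t}(x_1,…,x_n)) − ψ_{i,s_i}(L_i^{t} pert_i(x_1,…,x_i))| / ‖L_i‖^{t} = 0. -/

import Mathlib

/-!
Write `p j = pert_j(x)`. The matrices `D_{i,j}` solve the Sylvester equations
`L_{i+1} D_{i+1,j} - D_{i+1,j} L_j = C_i D_{i,j}` for `j ≤ i` (`sylvester`): in eigencoordinates this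
is division by `λ_{i+1,ℓ} - λ_{j,m}`, which is nonzero because the spectra are disjoint.
Hence the cascade is solved explicitly (`iterate_linStep`) by
`x_i(t) = ∑_{j ≤ i} (-1)^{i-j} D_{i,j} L_j^t p_j`: the Sylvester equation makes the right side obey
the recursion, and its value at `t = 0` is `x_i` by the definition of `pert`.
The `j = i` term is `L_i^t p_i`. Each other term is `O(‖L_j‖^t)` with `‖L_j‖ < ‖L_i‖`, so it vanishes
after division by `‖L_i‖^t`.
-/

open Matrix Finset Filter Topology

noncomputable section

/-- A matrix acting as a continuous linear map between Euclidean spaces. -/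
def matCLM {p q : ℕ} (M : Matrix (Fin p) (Fin q) ℂ) :
    EuclideanSpace ℂ (Fin q) →L[ℂ] EuclideanSpace ℂ (Fin p) :=
  LinearMap.toContinuousLinearMap (Matrix.toEuclideanLin M)

/-- Operator norm of a matrix induced by the Euclidean norms. -/
def opN {p q : ℕ} (M : Matrix (Fin p) (Fin q) ℂ) : ℝ := ‖matCLM M‖

/-- One step of the chained linear cascade (levels indexed from `0`). -/
def LinStep {d : ℕ → ℕ} (L : ∀ i, Matrix (Fin (d i)) (Fin (d i)) ℂ)
    (C : ∀ i, Matrix (Fin (d (i+1))) (Fin (d i)) ℂ)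
    (x : ∀ i, EuclideanSpace ℂ (Fin (d i))) (i : ℕ) :
    EuclideanSpace ℂ (Fin (d i)) :=
  match i with
  | 0 => matCLM (L 0) (x 0)
  | (i+1) => matCLM (L (i+1)) (x (i+1)) + matCLM (C i) (x i)

/-- The matrices `D_{i,j}` of the paper (levels indexed from `0`). -/
def Dmat {d : ℕ → ℕ} (L : ∀ i, Matrix (Fin (d i)) (Fin (d i)) ℂ)
    (C : ∀ i, Matrix (Fin (d (i+1))) (Fin (d i)) ℂ)
    (V : ∀ i, Matrix (Fin (d i)) (Fin (d i)) ℂ)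
    (ev : ∀ i, Fin (d i) → ℂ) : ∀ i j : ℕ, Matrix (Fin (d i)) (Fin (d j)) ℂ
  | 0, 0 => 1
  | 0, _ + 1 => 0
  | i + 1, j =>
    if h : j = i + 1 then by subst h; exact 1
    else
      (L (i+1))⁻¹ * V (i+1) *
        Matrix.of (fun ℓ m =>
          ((V (i+1))⁻¹ * C i * Dmat L C V ev i j * V j) ℓ m
            * (1 - ev j m / ev (i+1) ℓ)⁻¹) * (V j)⁻¹

/-- The perturbation maps `pert_i` of the paper (levels indexed from `0`). -/
def pert {d : ℕ → ℕ} (L : ∀ i, Matrix (Fin (d i)) (Fin (d i)) ℂ)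
    (C : ∀ i, Matrix (Fin (d (i+1))) (Fin (d i)) ℂ)
    (V : ∀ i, Matrix (Fin (d i)) (Fin (d i)) ℂ)
    (ev : ∀ i, Fin (d i) → ℂ)
    (x : ∀ k, EuclideanSpace ℂ (Fin (d k))) : ∀ i : ℕ, EuclideanSpace ℂ (Fin (d i))
  | 0 => x 0
  | i + 1 => x (i+1) + ∑ j ∈ (Finset.range (i+1)).attach,
      ((-1 : ℂ) ^ (i - j.1)) • matCLM (Dmat L C V ev (i+1) j.1) (pert L C V ev x j.1)
  termination_by i => i
  decreasing_by exact Finset.mem_range.mp j.2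

/-- The `s`-th principal eigenfunction of component system `i`. -/
def psi {d : ℕ → ℕ} (V : ∀ i, Matrix (Fin (d i)) (Fin (d i)) ℂ) (i : ℕ) (s : Fin (d i)) :
    EuclideanSpace ℂ (Fin (d i)) →L[ℂ] ℂ :=
  (EuclideanSpace.proj s).comp (matCLM (V i)⁻¹)

lemma matCLM_mul_apply {p q r : ℕ} (M : Matrix (Fin p) (Fin q) ℂ) (N : Matrix (Fin q) (Fin r) ℂ)
    (v : EuclideanSpace ℂ (Fin r)) : matCLM (M * N) v = matCLM M (matCLM N v) := by
  simp [matCLM, Matrix.toLpLin_apply, Matrix.mulVec_mulVec]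

lemma matCLM_add_apply {p q : ℕ} (M N : Matrix (Fin p) (Fin q) ℂ)
    (v : EuclideanSpace ℂ (Fin q)) : matCLM (M + N) v = matCLM M v + matCLM N v := by
  simp [matCLM]

lemma matCLM_one_apply {p : ℕ} (v : EuclideanSpace ℂ (Fin p)) :
    matCLM (1 : Matrix (Fin p) (Fin p) ℂ) v = v := by
  simp [matCLM]

lemma norm_matCLM_pow_apply_le {p : ℕ} (M : Matrix (Fin p) (Fin p) ℂ) (t : ℕ)
    (v : EuclideanSpace ℂ (Fin p)) : ‖matCLM (M ^ t) v‖ ≤ opN M ^ t * ‖v‖ := by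
  induction t with
  | zero => simp [matCLM_one_apply]
  | succ t ih =>
    rw [pow_succ', matCLM_mul_apply, pow_succ', mul_assoc]
    exact ((matCLM M).le_opNorm _).trans (mul_le_mul_of_nonneg_left ih (norm_nonneg _))

/-- Solution of a Sylvester equation in eigencoordinates: with `A = P Λ P⁻¹` invertible and
`B = Q M Q⁻¹`, the matrix `X` given by entrywise division solves `A X = X B + K`. -/
lemma sylvester_of_diagonal {p q : ℕ} (A P : Matrix (Fin p) (Fin p) ℂ)
    (B Q : Matrix (Fin q) (Fin q) ℂ) (a : Fin p → ℂ) (b : Fin q → ℂ)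
    (K : Matrix (Fin p) (Fin q) ℂ)
    (hA : A = P * Matrix.diagonal a * P⁻¹) (hB : B = Q * Matrix.diagonal b * Q⁻¹)
    (hP : IsUnit P) (hQ : IsUnit Q) (hAu : IsUnit A) (hab : ∀ ℓ m, a ℓ ≠ b m)
    (X : Matrix (Fin p) (Fin q) ℂ)
    (hX : X = A⁻¹ * P * Matrix.of (fun ℓ m => (P⁻¹ * K * Q) ℓ m * (1 - b m / a ℓ)⁻¹) * Q⁻¹) :
    A * X = X * B + K := by
  have hPd := (Matrix.isUnit_iff_isUnit_det _).1 hP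
  have hQd := (Matrix.isUnit_iff_isUnit_det _).1 hQ
  have hAd := (Matrix.isUnit_iff_isUnit_det _).1 hAu
  have hAP : A * P = P * Matrix.diagonal a := by
    rw [hA, Matrix.nonsing_inv_mul_cancel_right _ _ hPd]
  have hBQ : Q⁻¹ * B = Matrix.diagonal b * Q⁻¹ := by
    rw [hB, Matrix.mul_assoc, Matrix.nonsing_inv_mul_cancel_left _ _ hQd]
  -- The eigenvalues of `A` are nonzero, since their product is `det A`.
  have ha : ∀ ℓ, a ℓ ≠ 0 := by
    have hdet : A.det = ∏ ℓ, a ℓ := by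
      rw [hA, Matrix.det_conj hP, Matrix.det_diagonal]
    have := hAd.ne_zero
    rw [hdet, Finset.prod_ne_zero_iff] at this
    exact fun ℓ => this ℓ (Finset.mem_univ _)
  set T : Matrix (Fin p) (Fin q) ℂ :=
    Matrix.of (fun ℓ m => (P⁻¹ * K * Q) ℓ m * (1 - b m / a ℓ)⁻¹) with hT
  have hdiag : Matrix.diagonal a * T
      = T * Matrix.diagonal b + Matrix.diagonal a * (P⁻¹ * K * Q) := by
    ext ℓ m
    have h1 : a ℓ - b m ≠ 0 := sub_ne_zero.2 (hab ℓ m)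
    have h2 := ha ℓ
    have h3 : (1 - b m / a ℓ)⁻¹ = a ℓ / (a ℓ - b m) := by
      rw [one_sub_div h2, inv_div]
    simp only [Matrix.add_apply, Matrix.diagonal_mul, Matrix.mul_diagonal, hT, Matrix.of_apply, h3]
    field_simp
    ring
  have hAX : A * X = P * T * Q⁻¹ := by
    rw [hX]
    simp only [Matrix.mul_assoc]
    rw [Matrix.mul_nonsing_inv_cancel_left _ _ hAd]
  -- It suffices to check the identity after left multiplication by `A`.
  have key : A * (A * X) = A * (X * B + K) := by
    calc A * (A * X) = P * (Matrix.diagonal a * T) * Q⁻¹ := by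
          rw [hAX, ← Matrix.mul_assoc, ← Matrix.mul_assoc, hAP]
          simp only [Matrix.mul_assoc]
      _ = P * T * (Matrix.diagonal b * Q⁻¹)
            + (P * Matrix.diagonal a) * (P⁻¹ * (K * (Q * Q⁻¹))) := by
          rw [hdiag]
          simp only [Matrix.mul_add, Matrix.add_mul, Matrix.mul_assoc]
      _ = P * T * Q⁻¹ * B + A * K := by
          rw [← hBQ, ← hAP, Matrix.mul_nonsing_inv _ hQd, Matrix.mul_one, Matrix.mul_assoc A P,
            Matrix.mul_nonsing_inv_cancel_left _ _ hPd]
          simp only [Matrix.mul_assoc]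
      _ = A * (X * B + K) := by
          rw [← hAX, Matrix.mul_add, Matrix.mul_assoc]
  exact by
    simpa only [Matrix.nonsing_inv_mul_cancel_left _ _ hAd] using congrArg (A⁻¹ * ·) key

section Cascade

variable {d : ℕ → ℕ} (L : ∀ i, Matrix (Fin (d i)) (Fin (d i)) ℂ)
  (C : ∀ i, Matrix (Fin (d (i+1))) (Fin (d i)) ℂ)
  (V : ∀ i, Matrix (Fin (d i)) (Fin (d i)) ℂ)
  (ev : ∀ i, Fin (d i) → ℂ)

lemma Dmat_self (i : ℕ) : Dmat L C V ev i i = 1 := by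
  cases i <;> simp [Dmat]

lemma sylvester
    (hdiag : ∀ i, L i = V i * Matrix.diagonal (ev i) * (V i)⁻¹)
    (hV : ∀ i, IsUnit (V i)) (hLu : ∀ i, IsUnit (L i))
    (hsp : ∀ i j : ℕ, i ≠ j → ∀ ℓ m, ev i ℓ ≠ ev j m) {i j : ℕ} (hj : j ≤ i) :
    L (i+1) * Dmat L C V ev (i+1) j
      = Dmat L C V ev (i+1) j * L j + C i * Dmat L C V ev i j := by
  have hne : j ≠ i + 1 := by omega
  refine sylvester_of_diagonal _ _ _ _ _ _ _ (hdiag (i+1)) (hdiag j) (hV _) (hV _) (hLu _)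
    (hsp _ _ hne.symm) _ ?_
  rw [Dmat, dif_neg hne]
  simp only [Matrix.mul_assoc]

/-- The closed form `∑_{j ≤ i} (-1)^{i-j} D_{i,j} L_j^t p_j` of the level-`i` state at time `t`. -/
def closedForm (x : ∀ i, EuclideanSpace ℂ (Fin (d i))) (t i : ℕ) : EuclideanSpace ℂ (Fin (d i)) :=
  ∑ j ∈ Finset.range (i+1), ((-1 : ℂ) ^ (i - j)) •
    matCLM (Dmat L C V ev i j) (matCLM (L j ^ t) (pert L C V ev x j))

lemma closedForm_eq_add (x : ∀ i, EuclideanSpace ℂ (Fin (d i))) (t i : ℕ) :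
    closedForm L C V ev x t i = (∑ j ∈ Finset.range i, ((-1 : ℂ) ^ (i - j)) •
      matCLM (Dmat L C V ev i j) (matCLM (L j ^ t) (pert L C V ev x j)))
        + matCLM (L i ^ t) (pert L C V ev x i) := by
  simp [closedForm, Finset.sum_range_succ, Dmat_self, matCLM_one_apply]

lemma closedForm_zero (x : ∀ i, EuclideanSpace ℂ (Fin (d i))) (i : ℕ) :
    closedForm L C V ev x 0 i = x i := by
  rw [closedForm_eq_add]
  cases i with
  | zero => simp [matCLM_one_apply, pert]
  | succ i =>
    simp only [pow_zero, matCLM_one_apply]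
    rw [pert, Finset.sum_attach (Finset.range (i+1)) (fun j => ((-1 : ℂ) ^ (i - j)) •
      matCLM (Dmat L C V ev (i+1) j) (pert L C V ev x j)), add_left_comm,
      ← Finset.sum_add_distrib, Finset.sum_eq_zero, add_zero]
    intro j hj
    have hj' : j ≤ i := Nat.lt_succ_iff.1 (Finset.mem_range.1 hj)
    rw [Nat.succ_sub hj', pow_succ]
    simp

variable {L C V ev}

lemma closedForm_succ
    (hdiag : ∀ i, L i = V i * Matrix.diagonal (ev i) * (V i)⁻¹)
    (hV : ∀ i, IsUnit (V i)) (hLu : ∀ i, IsUnit (L i))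
    (hsp : ∀ i j : ℕ, i ≠ j → ∀ ℓ m, ev i ℓ ≠ ev j m)
    (x : ∀ i, EuclideanSpace ℂ (Fin (d i))) (t i : ℕ) :
    closedForm L C V ev x (t+1) i = LinStep L C (closedForm L C V ev x t) i := by
  cases i with
  | zero => simp [LinStep, closedForm_eq_add, pow_succ', matCLM_mul_apply]
  | succ i =>
    rw [LinStep, closedForm_eq_add, closedForm_eq_add, closedForm, map_add, add_right_comm,
      map_sum, map_sum, ← Finset.sum_add_distrib, pow_succ', matCLM_mul_apply]
    congr 1
    refine Finset.sum_congr rfl fun j hj => ?_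
    have hj' : j ≤ i := Nat.lt_succ_iff.1 (Finset.mem_range.1 hj)
    rw [map_smul, map_smul, ← matCLM_mul_apply (L (i+1)), sylvester L C V ev hdiag hV hLu hsp hj',
      matCLM_add_apply, pow_succ', matCLM_mul_apply (L j), matCLM_mul_apply, matCLM_mul_apply,
      Nat.succ_sub hj', pow_succ]
    module

lemma iterate_linStep
    (hdiag : ∀ i, L i = V i * Matrix.diagonal (ev i) * (V i)⁻¹)
    (hV : ∀ i, IsUnit (V i)) (hLu : ∀ i, IsUnit (L i))
    (hsp : ∀ i j : ℕ, i ≠ j → ∀ ℓ m, ev i ℓ ≠ ev j m)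
    (x : ∀ i, EuclideanSpace ℂ (Fin (d i))) (t : ℕ) :
    (LinStep L C)^[t] x = closedForm L C V ev x t := by
  induction t with
  | zero => exact funext fun i => (closedForm_zero L C V ev x i).symm
  | succ t ih =>
    rw [Function.iterate_succ_apply', ih]
    exact funext fun i => (closedForm_succ hdiag hV hLu hsp x t i).symm

end Cascade

/-- perturbation of principal eigenfunctions: zero asymptotic relative error,
Condition (★) in full. Levels are indexed from `0`, so the quantifier over all `i : ℕ`
corresponds to the paper's `i ∈ {1,…,n}`. -/
theorem stmt9 {d : ℕ → ℕ} (L : ∀ i, Matrix (Fin (d i)) (Fin (d i)) ℂ)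
    (C : ∀ i, Matrix (Fin (d (i+1))) (Fin (d i)) ℂ)
    (V : ∀ i, Matrix (Fin (d i)) (Fin (d i)) ℂ)
    (ev : ∀ i, Fin (d i) → ℂ)
    (hdiag : ∀ i, L i = V i * Matrix.diagonal (ev i) * (V i)⁻¹)
    (hV : ∀ i, IsUnit (V i))
    (hLu : ∀ i, IsUnit (L i))
    (hsp : ∀ i j : ℕ, i ≠ j → ∀ ℓ m, ev i ℓ ≠ ev j m)
    (hmono : ∀ i, opN (L i) < opN (L (i+1)))
    (hone : ∀ i, opN (L i) ≤ 1)
    (x : ∀ i, EuclideanSpace ℂ (Fin (d i))) (i : ℕ) (s : Fin (d i)) :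
    Tendsto
      (fun t : ℕ =>
        ‖psi V i s ((LinStep L C)^[t] x i)
            - psi V i s (matCLM ((L i) ^ t) (pert L C V ev x i))‖ / opN (L i) ^ t)
      atTop (𝓝 0) := by
  have hmono' : StrictMono fun k => opN (L k) := strictMono_nat_of_lt_succ hmono
  set p := pert L C V ev x with hp
  set c : ℕ → ℝ := fun j =>
    ‖(psi V i s).comp (matCLM (Dmat L C V ev i j))‖ * ‖p j‖ with hc
  have hlim : Tendsto (fun t : ℕ => ∑ j ∈ Finset.range i, c j * (opN (L j) / opN (L i)) ^ t)
      atTop (𝓝 0) := by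
    rw [← Finset.sum_const_zero (s := Finset.range i)]
    refine tendsto_finsetSum _ fun j hj => ?_
    have hlt : opN (L j) < opN (L i) := hmono' (Finset.mem_range.1 hj)
    have h0 : 0 ≤ opN (L j) := norm_nonneg _
    simpa using (tendsto_pow_atTop_nhds_zero_of_lt_one (div_nonneg h0 (h0.trans hlt.le))
      ((div_lt_one (h0.trans_lt hlt)).2 hlt)).const_mul (c j)
  refine squeeze_zero (fun t => div_nonneg (norm_nonneg _) (pow_nonneg (norm_nonneg _) _))
    (fun t => ?_) hlim
  rw [iterate_linStep hdiag hV hLu hsp, closedForm_eq_add, map_add, add_sub_cancel_right, map_sum]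
  have hb : ‖∑ j ∈ Finset.range i, psi V i s (((-1 : ℂ) ^ (i - j)) •
      matCLM (Dmat L C V ev i j) (matCLM (L j ^ t) (p j)))‖
      ≤ ∑ j ∈ Finset.range i, c j * opN (L j) ^ t := by
    refine norm_sum_le_of_le _ fun j _ => ?_
    rw [map_smul, norm_smul, norm_pow, norm_neg, norm_one, one_pow, one_mul]
    calc _ ≤ ‖(psi V i s).comp (matCLM (Dmat L C V ev i j))‖ * ‖matCLM (L j ^ t) (p j)‖ :=
          ((psi V i s).comp (matCLM (Dmat L C V ev i j))).le_opNorm _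
      _ ≤ ‖(psi V i s).comp (matCLM (Dmat L C V ev i j))‖ * (opN (L j) ^ t * ‖p j‖) :=
          mul_le_mul_of_nonneg_left (norm_matCLM_pow_apply_le _ _ _) (norm_nonneg _)
      _ = c j * opN (L j) ^ t := by rw [hc]; ring
  refine (div_le_div_of_nonneg_right hb (pow_nonneg (norm_nonneg _) _)).trans_eq ?_
  rw [Finset.sum_div]
  exact Finset.sum_congr rfl fun j _ => by rw [div_pow, mul_div_assoc, opN, opN]
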